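/- Let ρ be a d×d complex density matrix and let α, β be d×d complex matrices with Tr(ρα) = 0 and Tr(ρβ) = 0. Then, as n → ∞, the GNS inner products Tr( ρ^⊗n · (G_α^{(n)})† · G_β^{(n)} ) converge to exp( Tr(ρ · α† · β) ) (a quantum central limit for the vertex operators G). -/

import Mathlib

open scoped ComplexOrder
open Matrix

noncomputable section

/-- The `n`-fold tensor power of a `d×d` matrix, on sites indexed by `Fin n → Fin d`:
`(ρ^{⊗n})(x,z) = ∏ i, ρ (x i) (z i)`. -/
def tensorPow (d n : ℕ) (ρ : Matrix (Fin d) (Fin d) ℂ) :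
    Matrix (Fin n → Fin d) (Fin n → Fin d) ℂ :=
  fun x z => ∏ i, ρ (x i) (z i)

/-- Tensor product `A₁ ⊗ ⋯ ⊗ Aₙ` of single-site matrices. -/
def siteProd (d n : ℕ) (A : Fin n → Matrix (Fin d) (Fin d) ℂ) :
    Matrix (Fin n → Fin d) (Fin n → Fin d) ℂ :=
  fun x z => ∏ i, A i (x i) (z i)

/-- `Ω_σ(A) = (σA + Aσ)/2`. -/
def Omega {m : Type*} [Fintype m] (σ A : Matrix m m ℂ) : Matrix m m ℂ :=
  (1 / 2 : ℂ) • (σ * A + A * σ)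

/-- The depolarizing channel `D_y(A) = y⁻¹ A + (1 - y⁻¹) (Tr A / d) I` applied to site `i`
of an `n`-site matrix. -/
def depolSite (d n : ℕ) (y : ℝ) (i : Fin n)
    (M : Matrix (Fin n → Fin d) (Fin n → Fin d) ℂ) :
    Matrix (Fin n → Fin d) (Fin n → Fin d) ℂ :=
  fun x z => ((y⁻¹ : ℝ) : ℂ) * M x z +
    ((1 - y⁻¹ : ℝ) : ℂ) / (d : ℂ) *
      (if x i = z i then ∑ a : Fin d, M (Function.update x i a) (Function.update z i a) else 0)

/-- `D_y^{⊗n}`: the depolarizing channel applied to every one of the `n` sites. -/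
def depolPow (d n : ℕ) (y : ℝ) :
    Matrix (Fin n → Fin d) (Fin n → Fin d) ℂ → Matrix (Fin n → Fin d) (Fin n → Fin d) ℂ :=
  (List.finRange n).foldr (fun i f => depolSite d n y i ∘ f) id

/-- `T_Σ`: the linear span of operators acting as `aᵢ` with `Tr(ρ aᵢ) = 0` on each site
`i ∈ S` and as the identity on all other sites. -/
def TS (d n : ℕ) (ρ : Matrix (Fin d) (Fin d) ℂ) (S : Finset (Fin n)) :
    Submodule ℂ (Matrix (Fin n → Fin d) (Fin n → Fin d) ℂ) :=
  Submodule.span ℂ {M | ∃ a : Fin n → Matrix (Fin d) (Fin d) ℂ,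
    (∀ i ∈ S, (ρ * a i).trace = 0) ∧ (∀ i ∉ S, a i = 1) ∧ M = siteProd d n a}

/-- The permutation unitary `U_π`, with entries `(U_π)_{x,y} = 1` iff `x = y ∘ π⁻¹`. -/
def permU (d n : ℕ) (π : Equiv.Perm (Fin n)) :
    Matrix (Fin n → Fin d) (Fin n → Fin d) ℂ :=
  fun x z => if x = z ∘ ⇑π⁻¹ then 1 else 0

/-- The symmetrizing channel `P(A) = (1/n!) ∑_π U_π A U_π†`. -/
def symmetrize (d n : ℕ) (A : Matrix (Fin n → Fin d) (Fin n → Fin d) ℂ) :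
    Matrix (Fin n → Fin d) (Fin n → Fin d) ℂ :=
  ((n.factorial : ℂ))⁻¹ • ∑ π : Equiv.Perm (Fin n), permU d n π * A * (permU d n π)ᴴ

/-- Vertex operator `G_α^{(n)} = (I + (i/√n)α)^{⊗n}`. -/
def GVertex (d n : ℕ) (α : Matrix (Fin d) (Fin d) ℂ) :
    Matrix (Fin n → Fin d) (Fin n → Fin d) ℂ :=
  tensorPow d n (1 + (Complex.I / (Real.sqrt n : ℂ)) • α)

lemma tensorPow_mul_aux (d n : ℕ) (A B : Matrix (Fin d) (Fin d) ℂ) :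
    tensorPow d n A * tensorPow d n B = tensorPow d n (A * B) := by
  ext x z
  simp only [tensorPow, Matrix.mul_apply, ← Finset.prod_mul_distrib]
  exact (Fintype.prod_sum (fun i j => A (x i) j * B j (z i))).symm

lemma tensorPow_conjTranspose_aux (d n : ℕ) (A : Matrix (Fin d) (Fin d) ℂ) :
    (tensorPow d n A)ᴴ = tensorPow d n Aᴴ := by
  ext x z
  simp [tensorPow, Matrix.conjTranspose_apply]

lemma tensorPow_trace_aux (d n : ℕ) (A : Matrix (Fin d) (Fin d) ℂ) :
    (tensorPow d n A).trace = A.trace ^ n := by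
  simp only [tensorPow, Matrix.trace, Matrix.diag_apply]
  rw [← Fintype.prod_sum (fun (_ : Fin n) j => A j j)]
  simp

/-- quantum central limit for the vertex operators: the GNS inner products
converge to `exp(Tr(ρ α† β))` as `n → ∞`. -/
theorem vertex_central_limit
    (d : ℕ) (hd : 1 ≤ d)
    (ρ : Matrix (Fin d) (Fin d) ℂ) (hρ : ρ.PosSemidef) (hρtr : ρ.trace = 1)
    (α β : Matrix (Fin d) (Fin d) ℂ)
    (hα : (ρ * α).trace = 0) (hβ : (ρ * β).trace = 0) :
    Filter.Tendsto
      (fun n : ℕ => (tensorPow d n ρ * (GVertex d n α)ᴴ * GVertex d n β).trace)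
      Filter.atTop (nhds (Complex.exp ((ρ * αᴴ * β).trace))) := by
  have hα' : (ρ * αᴴ).trace = 0 := by
    have h := congrArg star hα
    rw [← Matrix.trace_conjTranspose, Matrix.conjTranspose_mul, hρ.isHermitian.eq,
      Matrix.trace_mul_comm] at h
    simpa using h
  refine (Complex.tendsto_one_add_div_pow_exp ((ρ * αᴴ * β).trace)).congr (fun n => ?_)
  rw [GVertex, GVertex, tensorPow_conjTranspose_aux, tensorPow_mul_aux, tensorPow_mul_aux,
    tensorPow_trace_aux]
  congr 1
  have hs : star (Complex.I / (Real.sqrt n : ℂ)) * (Complex.I / (Real.sqrt n : ℂ))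
      = 1 / (n : ℂ) := by
    have h2 : (Real.sqrt n : ℂ) * (Real.sqrt n : ℂ) = (n : ℂ) := by
      rw [← Complex.ofReal_mul, Real.mul_self_sqrt (Nat.cast_nonneg n)]
      simp
    simp only [Complex.star_def, map_div₀, Complex.conj_I, Complex.conj_ofReal]
    rw [div_mul_div_comm, h2]
    simp
  generalize Complex.I / (Real.sqrt n : ℂ) = c at hs
  simp only [Matrix.conjTranspose_add, Matrix.conjTranspose_one, Matrix.conjTranspose_smul,
    mul_add, add_mul, mul_one, Matrix.mul_smul, Matrix.smul_mul, Matrix.trace_add,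
    Matrix.trace_smul, hρtr, hα', hβ, smul_eq_mul, mul_zero, add_zero, zero_add]
  linear_combination (-(ρ * αᴴ * β).trace) * hs
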